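/- Let H=(G,ξ) be a temporal graph with temporal domain t_1 < ... < t_n, let P be a BGP, and let 1 ≤ i ≤ n. Let μ be a maximal partial matching of P in the history Hist(H, t_{i-1}) and let μ' be a partial matching of P in the history Hist(H, t_i) with μ ⊆ μ'. If y is an edge variable on which μ' is defined and the edge μ'(y) is active at some timepoint t_j with j ≤ i−1, then μ is defined on y (and hence μ(y) = μ'(y)). -/

import Mathlib

/-!
Restrict `μ'` to the variables whose images lie in the earlier history `Hist(H, t_{i-1})`. The
endpoints of an edge of that history are nodes of it, so the restriction is again a partial
matching (`isPartialMatching_restrict`), now in `Hist(H, t_{i-1})`, and it extends `μ`. By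
maximality it equals `μ`. Since the edge `μ'(y)` was active at some `t_j` with `j ≤ i - 1`, it
belongs to the earlier history, so the restriction, and hence `μ`, sends `y` to it.
-/

/-- A graph `(N, E, ρ, λ)`: sets of nodes and edges, source/destination maps,
and labeling functions for nodes and edges. -/
structure TGraph (V E L : Type) where
  nodes : Set V
  edges : Set E
  src : E → V
  dst : E → V
  nlbl : V → L
  elbl : E → L

/-- A basic graph pattern (BGP): node constants are actual nodes (type `V`),
`X` is the type of node variables, `Y` the type of edge variables. Each edge
variable gets a source and destination which is either a node constant
(`Sum.inl`) or a node variable (`Sum.inr`); `λ_P` is a partial labeling. -/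
structure TBGP (V X Y L : Type) where
  src : Y → V ⊕ X
  dst : Y → V ⊕ X
  nlbl : X → Option L
  elbl : Y → Option L

/-- A candidate partial matching: partial maps from node variables to nodes
and from edge variables to edges. -/
structure PMatch (V E X Y : Type) where
  mX : X → Option V
  mY : Y → Option E

/-- The endpoint condition `ρ(μ(y)) = (μ(x₁), μ(x₂))`, with `μ(c) = c` for
node constants: `v` is the actual endpoint of the matched edge,
`side` the corresponding endpoint of the edge variable in the pattern. -/
def endpointOK {V E X Y : Type} (μ : PMatch V E X Y) (side : V ⊕ X) (v : V) : Prop :=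
  match side with
  | Sum.inl c => v = c
  | Sum.inr x => μ.mX x = some v

/-- `μ` is a partial matching of the BGP `P` in the graph `G`. -/
def IsPartialMatching {V E X Y L : Type} (P : TBGP V X Y L) (G : TGraph V E L)
    (μ : PMatch V E X Y) : Prop :=
  (∀ x v, μ.mX x = some v → v ∈ G.nodes) ∧
  (∀ y e, μ.mY y = some e → e ∈ G.edges) ∧
  (∀ y e, μ.mY y = some e →
      endpointOK μ (P.src y) (G.src e) ∧ endpointOK μ (P.dst y) (G.dst e)) ∧
  (∀ x v l, μ.mX x = some v → P.nlbl x = some l → G.nlbl v = l) ∧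
  (∀ y e l, μ.mY y = some e → P.elbl y = some l → G.elbl e = l)

/-- `μ'` extends `μ` as a function (i.e., `μ ⊆ μ'`). -/
def Extends {V E X Y : Type} (μ μ' : PMatch V E X Y) : Prop :=
  (∀ x v, μ.mX x = some v → μ'.mX x = some v) ∧
  (∀ y e, μ.mY y = some e → μ'.mY y = some e)

/-- `μ` is a maximal partial matching of `P` in `G`: it is a partial matching
and no partial matching of `P` in `G` strictly extends it. -/
def IsMaximal {V E X Y L : Type} (P : TBGP V X Y L) (G : TGraph V E L)
    (μ : PMatch V E X Y) : Prop :=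
  IsPartialMatching P G μ ∧
    ∀ μ', IsPartialMatching P G μ' → Extends μ μ' → μ' = μ

/-- Edges of the history `Hist(H, t_i)`: edges of `G` active at some `t_j`, `1 ≤ j ≤ i`. -/
def histEdges {V E L : Type} (G : TGraph V E L) (ξ : E → Finset ℝ) (t : ℕ → ℝ)
    (i : ℕ) : Set E :=
  {e | e ∈ G.edges ∧ ∃ j, 1 ≤ j ∧ j ≤ i ∧ t j ∈ ξ e}

/-- The history `Hist(H, t_i)`: the subgraph of `G` induced by all edges active
at some `t_j` with `j ≤ i` (`i = 0` gives the empty graph). -/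
def hist {V E L : Type} (G : TGraph V E L) (ξ : E → Finset ℝ) (t : ℕ → ℝ)
    (i : ℕ) : TGraph V E L where
  nodes := {v | ∃ e ∈ histEdges G ξ t i, G.src e = v ∨ G.dst e = v}
  edges := histEdges G ξ t i
  src := G.src
  dst := G.dst
  nlbl := G.nlbl
  elbl := G.elbl

/-- The `j`-th letter of the timed word `w_μ`:
`a_j = {y ∈ Y : μ is defined on y and t_j ∈ ξ(μ(y))}`. -/
def letterAt {V E X Y : Type} (ξ : E → Finset ℝ) (t : ℕ → ℝ)
    (μ : PMatch V E X Y) (j : ℕ) : Set Y :=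
  {y | ∃ e, μ.mY y = some e ∧ t j ∈ ξ e}

open Classical in
/-- The restriction of `μ` to those variables whose images are nodes or edges of `G`. -/
noncomputable def PMatch.restrict {V E X Y L : Type} (μ : PMatch V E X Y) (G : TGraph V E L) :
    PMatch V E X Y where
  mX x := (μ.mX x).filter (· ∈ G.nodes)
  mY y := (μ.mY y).filter (· ∈ G.edges)

theorem restrict_mX {V E X Y L : Type} {μ : PMatch V E X Y} {G : TGraph V E L} {x : X} {v : V} :
    (μ.restrict G).mX x = some v ↔ μ.mX x = some v ∧ v ∈ G.nodes := by
  simp [PMatch.restrict, Option.filter_eq_some_iff]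

theorem restrict_mY {V E X Y L : Type} {μ : PMatch V E X Y} {G : TGraph V E L} {y : Y} {e : E} :
    (μ.restrict G).mY y = some e ↔ μ.mY y = some e ∧ e ∈ G.edges := by
  simp [PMatch.restrict, Option.filter_eq_some_iff]

theorem endpointOK_restrict {V E X Y L : Type} {μ : PMatch V E X Y} {G : TGraph V E L}
    {s : V ⊕ X} {v : V} (h : endpointOK μ s v) (hv : v ∈ G.nodes) :
    endpointOK (μ.restrict G) s v := by
  cases s with
  | inl c => exact h
  | inr x => exact restrict_mX.2 ⟨h, hv⟩

/-- All histories carry the source, destination and label maps of `G`, so no relation between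
`i` and `k` is needed. -/
theorem isPartialMatching_restrict {V E X Y L : Type} {G : TGraph V E L} {ξ : E → Finset ℝ}
    {P : TBGP V X Y L} {t : ℕ → ℝ} {i : ℕ} (k : ℕ) {μ : PMatch V E X Y}
    (h : IsPartialMatching P (hist G ξ t i) μ) :
    IsPartialMatching P (hist G ξ t k) (μ.restrict (hist G ξ t k)) := by
  obtain ⟨-, -, hend, hnl, hel⟩ := h
  refine ⟨fun x v hx => (restrict_mX.1 hx).2, fun y e hy => (restrict_mY.1 hy).2, ?_,
    fun x v l hx => hnl x v l (restrict_mX.1 hx).1, fun y e l hy => hel y e l (restrict_mY.1 hy).1⟩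
  intro y e hy
  obtain ⟨hy, he⟩ := restrict_mY.1 hy
  exact ⟨endpointOK_restrict (hend y e hy).1 ⟨e, he, Or.inl rfl⟩,
    endpointOK_restrict (hend y e hy).2 ⟨e, he, Or.inr rfl⟩⟩

/-- Let `μ` be a maximal partial matching of `P` in `Hist(H, t_{i-1})`
and `μ'` a partial matching of `P` in `Hist(H, t_i)` with `μ ⊆ μ'`. If `y` is an edge
variable on which `μ'` is defined and the edge `μ'(y)` is active at some `t_j` with
`j ≤ i - 1`, then `μ` is defined on `y` and `μ(y) = μ'(y)`. -/
theorem stmt3 {V E X Y L : Type}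
    (G : TGraph V E L) (ξ : E → Finset ℝ) (P : TBGP V X Y L)
    (n : ℕ) (t : ℕ → ℝ)
    -- the graph is well-formed: endpoints of edges are nodes
    (hwf : ∀ e ∈ G.edges, G.src e ∈ G.nodes ∧ G.dst e ∈ G.nodes)
    -- timepoints are strictly positive
    (hpos : ∀ e ∈ G.edges, ∀ s ∈ ξ e, (0:ℝ) < s)
    -- `t 1 < t 2 < ⋯ < t n` enumerates the temporal domain of `H = (G, ξ)`
    (hmono : ∀ j k, 1 ≤ j → j < k → k ≤ n → t j < t k)
    (hcover : ∀ e ∈ G.edges, ∀ s ∈ ξ e, ∃ j, 1 ≤ j ∧ j ≤ n ∧ t j = s)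
    (hrange : ∀ j, 1 ≤ j → j ≤ n → ∃ e ∈ G.edges, t j ∈ ξ e)
    (i : ℕ) (hi1 : 1 ≤ i) (hin : i ≤ n)
    (μ μ' : PMatch V E X Y)
    (hmax : IsMaximal P (hist G ξ t (i - 1)) μ)
    (hpm' : IsPartialMatching P (hist G ξ t i) μ')
    (hext : Extends μ μ')
    (y : Y) (e : E) (hy' : μ'.mY y = some e)
    (j : ℕ) (hj1 : 1 ≤ j) (hji : j ≤ i - 1) (hact : t j ∈ ξ e) :
    μ.mY y = some e := by
  have hle : Extends μ (μ'.restrict (hist G ξ t (i - 1))) :=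
    ⟨fun x v hx => restrict_mX.2 ⟨hext.1 x v hx, hmax.1.1 x v hx⟩,
      fun y e hy => restrict_mY.2 ⟨hext.2 y e hy, hmax.1.2.1 y e hy⟩⟩
  rw [← hmax.2 _ (isPartialMatching_restrict (i - 1) hpm') hle]
  exact restrict_mY.2 ⟨hy', (hpm'.2.1 y e hy').1, j, hj1, hji, hact⟩
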